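/- Let ψ : ℝ → ℂ be a 2π-periodic function satisfying the Lipschitz condition |ψ(u) − ψ(v)| ≤ C|u − v| for all u, v ∈ [−π, π], let φ(u) = ψ(u) sinh(u), and let f(x) = ∫_{−π}^{π} φ(u) [2/π + x cosh(u) M₀(x cosh u)] du for x > 0. Then for every t > 0, ∫₀^t f(y)/(t² − y²)^{1/2} dy = ∫_{−π}^{π} e^{−t cosh u} φ(u) du. -/

import Mathlib

/-!
Put `K(z) = 2/π + z M₀(z)` and `Wₙ = ∫₀^{π/2} sinⁿ α dα`. Expanding the exponential in the
definition of `M₀` and integrating termwise, the Wallis product identity `(n + 1) Wₙ Wₙ₊₁ = π/2`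
gives `K(z) = ∑ (-z)ⁿ / (n! Wₙ)`. A second termwise integration cancels the `Wₙ`:
`∫₀^{π/2} K(z sin α) dα = e^{-z}`.

The substitution `y = t sin α` turns `∫₀^t f(y) / (t² - y²)^{1/2} dy` into `∫₀^{π/2} f(t sin α) dα`.
Fubini's theorem brings the integral over `α` inside the one over `u`, where the identity above
applies with `z = t cosh u`.
-/

open MeasureTheory Real

/-- The modified Struve function `M₀(z) = −(2/π) ∫₀^{π/2} e^{−z cos θ} dθ`. -/
noncomputable def struveM (z : ℂ) : ℂ :=
  -(2 / π) * ∫ θ in (0 : ℝ)..(π / 2), Complex.exp (-z * Real.cos θ)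

lemma hasSum_exp_neg (z : ℂ) :
    HasSum (fun n : ℕ => (-z) ^ n / n.factorial) (Complex.exp (-z)) :=
  Complex.exp_eq_exp_ℂ ▸ NormedSpace.expSeries_div_hasSum_exp (-z)

lemma hasSum_integral_mul_pow {c : ℕ → ℂ} (hc : Summable c) {F : ℝ → ℂ} {g : ℝ → ℝ} {a b : ℝ}
    (hg : Continuous g) (hg_le : ∀ x ∈ Set.uIoc a b, |g x| ≤ 1)
    (hF : ∀ x ∈ Set.uIoc a b, HasSum (fun n => c n * (g x : ℂ) ^ n) (F x)) :
    HasSum (fun n => c n * ((∫ x in a..b, g x ^ n : ℝ) : ℂ)) (∫ x in a..b, F x) := by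
  have termwise : HasSum (fun n => ∫ x in a..b, c n * (g x : ℂ) ^ n) (∫ x in a..b, F x) := by
    refine intervalIntegral.hasSum_integral_of_dominated_convergence (fun n _ => ‖c n‖)
      (fun n => Continuous.aestronglyMeasurable (by fun_prop))
      (fun n => .of_forall fun x hx => ?_) (.of_forall fun _ _ => hc.norm)
      intervalIntegrable_const (.of_forall hF)
    rw [norm_mul, norm_pow, Complex.norm_real, norm_eq_abs]
    exact mul_le_of_le_one_right (norm_nonneg _) (pow_le_one₀ (abs_nonneg _) (hg_le x hx))
  simpa only [intervalIntegral.integral_const_mul, ← Complex.ofReal_pow,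
    intervalIntegral.integral_ofReal] using termwise

lemma integrable_mul_comp_of_ae_norm_le {X E : Type*} [MeasurableSpace X] {μ : Measure X}
    [NormedAddCommGroup E] [ProperSpace E] {φ : X → ℂ} {w : X → E} {K : E → ℂ} {R : ℝ}
    (hφ : Integrable φ μ) (hK : Continuous K) (hw : AEStronglyMeasurable w μ)
    (hw_le : ∀ᵐ u ∂μ, ‖w u‖ ≤ R) :
    Integrable (fun u => φ u * K (w u)) μ := by
  obtain ⟨B, hB⟩ := (isCompact_closedBall (0 : E) R).exists_bound_of_continuousOn hK.continuousOn
  refine hφ.mul_bdd (c := B) (hK.comp_aestronglyMeasurable hw) ?_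
  filter_upwards [hw_le] with u hu
  exact hB _ (mem_closedBall_zero_iff.2 hu)

lemma integral_inv_sqrt_sq_sub_sq_smul {E : Type*} [NormedAddCommGroup E] [NormedSpace ℝ E]
    (g : ℝ → E) {t a b : ℝ} (ht : 0 < t) (ha : -(π / 2) ≤ a) (hab : a ≤ b) (hb : b ≤ π / 2) :
    ∫ y in (t * sin a)..(t * sin b), (√(t ^ 2 - y ^ 2))⁻¹ • g y = ∫ α in a..b, g (t * sin α) := by
  have hmono : StrictMonoOn (fun α => t * sin α) (Set.Icc a b) := fun x hx y hy hxy =>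
    mul_lt_mul_of_pos_left (strictMonoOn_sin.mono (Set.Icc_subset_Icc ha hb) hx hy hxy) ht
  have himage : (fun α => t * sin α) '' Set.Ioo a b = Set.Ioo (t * sin a) (t * sin b) :=
    ContinuousOn.image_Ioo_of_strictMonoOn hab (by fun_prop) hmono
  have hsin_le : t * sin a ≤ t * sin b :=
    hmono.monotoneOn (Set.left_mem_Icc.2 hab) (Set.right_mem_Icc.2 hab) hab
  rw [intervalIntegral.integral_of_le hsin_le, intervalIntegral.integral_of_le hab,
    integral_Ioc_eq_integral_Ioo, integral_Ioc_eq_integral_Ioo, ← himage,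
    integral_image_eq_integral_deriv_smul_of_monotoneOn measurableSet_Ioo
      (fun α _ => ((hasDerivAt_sin α).const_mul t).hasDerivWithinAt)
      (hmono.monotoneOn.mono Set.Ioo_subset_Icc_self)]
  refine setIntegral_congr_fun measurableSet_Ioo fun α hα => ?_
  have hcos : 0 < t * cos α :=
    mul_pos ht (cos_pos_of_mem_Ioo ⟨ha.trans_lt hα.1, hα.2.trans_le hb⟩)
  have hsqrt : √(t ^ 2 - (t * sin α) ^ 2) = t * cos α := by
    rw [← sqrt_sq hcos.le, mul_pow, mul_pow, cos_sq', mul_one_sub]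
  simp only [hsqrt, smul_inv_smul₀ hcos.ne']

/-- The Wallis integral `Wₙ = ∫₀^{π/2} sinⁿ α dα`, the factor that the weight `sinⁿ` or `cosⁿ`
contributes in the termwise integrations. Mathlib's `Real.Wallis.W` is the partial product of
Wallis's formula for `π`. -/
noncomputable def wallisIntegral (n : ℕ) : ℝ := ∫ α in (0 : ℝ)..(π / 2), sin α ^ n

lemma integral_cos_pow_eq_wallisIntegral (n : ℕ) :
    ∫ θ in (0 : ℝ)..(π / 2), cos θ ^ n = wallisIntegral n := by
  simpa [sin_pi_div_two_sub, wallisIntegral] using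
    intervalIntegral.integral_comp_sub_left (a := 0) (b := π / 2) (fun x => sin x ^ n) (π / 2)

lemma wallisIntegral_pos (n : ℕ) : 0 < wallisIntegral n :=
  integral_cos_pow_eq_wallisIntegral n ▸ EulerSine.integral_cos_pow_pos n

lemma wallisIntegral_mul_succ (n : ℕ) :
    (n + 1) * (wallisIntegral n * wallisIntegral (n + 1)) = π / 2 := by
  induction n with
  | zero => simp [wallisIntegral]
  | succ k ih =>
    have recurrence : wallisIntegral (k + 2) = (k + 1) / (k + 2) * wallisIntegral k := by
      simp [wallisIntegral, integral_sin_pow]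
    rw [recurrence, ← ih]
    push_cast
    field_simp
    ring

lemma inv_wallisIntegral_succ (n : ℕ) :
    (wallisIntegral (n + 1))⁻¹ = (n + 1) * (2 / π * wallisIntegral n) := by
  have hne := (wallisIntegral_pos (n + 1)).ne'
  field_simp
  linarith [wallisIntegral_mul_succ n]

lemma hasSum_struveM (z : ℂ) :
    HasSum (fun n : ℕ => -(2 / π) * ((-z) ^ n / n.factorial * wallisIntegral n)) (struveM z) := by
  have hexp := hasSum_integral_mul_pow (a := 0) (b := π / 2) (hasSum_exp_neg z).summable
    (F := fun θ => Complex.exp (-z * Real.cos θ)) continuous_cos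
    (fun θ _ => abs_cos_le_one θ) fun θ _ => by
      simpa only [← neg_mul, mul_pow, mul_div_right_comm] using hasSum_exp_neg (z * Real.cos θ)
  simp only [integral_cos_pow_eq_wallisIntegral] at hexp
  exact hexp.mul_left _

/-- The kernel `2/π + z M₀(z)`, through which `φ` determines the function `f`. -/
noncomputable def struveKernel (z : ℂ) : ℂ := 2 / π + z * struveM z

lemma hasSum_struveKernel (z : ℂ) :
    HasSum (fun n : ℕ => (-z) ^ n / n.factorial * ((wallisIntegral n)⁻¹ : ℝ)) (struveKernel z) := by
  refine (hasSum_nat_add_iff' 1).mp ?_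
  convert! (hasSum_struveM z).mul_left z using 1
  · ext n
    rw [inv_wallisIntegral_succ, Nat.factorial_succ]
    push_cast
    field_simp
    ring
  · simp [struveKernel, wallisIntegral]

lemma continuous_struveKernel : Continuous struveKernel := by
  unfold struveKernel struveM
  fun_prop

lemma integral_struveKernel_mul_sin (z : ℂ) :
    ∫ α in (0 : ℝ)..(π / 2), struveKernel (z * Real.sin α) = Complex.exp (-z) := by
  have hK := hasSum_integral_mul_pow (a := 0) (b := π / 2) (hasSum_struveKernel z).summable
    (F := fun α => struveKernel (z * Real.sin α)) continuous_sin
    (fun α _ => abs_sin_le_one α) fun α _ => by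
      simpa only [← neg_mul, mul_pow, mul_div_right_comm, mul_right_comm] using
        hasSum_struveKernel (z * Real.sin α)
  refine hK.unique ((hasSum_exp_neg z).congr_fun fun n => ?_)
  rw [← wallisIntegral, mul_assoc, ← Complex.ofReal_mul,
    inv_mul_cancel₀ (wallisIntegral_pos n).ne', Complex.ofReal_one, mul_one]

lemma integral_integral_struveKernel {X : Type*} [MeasurableSpace X] {μ : Measure X} [SFinite μ]
    {φ w : X → ℂ} {R : ℝ} (hφ : Integrable φ μ) (hw : AEStronglyMeasurable w μ)
    (hw_le : ∀ᵐ u ∂μ, ‖w u‖ ≤ R) :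
    ∫ α in (0 : ℝ)..(π / 2), ∫ u, φ u * struveKernel (w u * Real.sin α) ∂μ =
      ∫ u, Complex.exp (-w u) * φ u ∂μ := by
  have hsin : Continuous fun α : ℝ => (Real.sin α : ℂ) := by fun_prop
  have hint : Integrable (fun p : ℝ × X => φ p.2 * struveKernel (w p.2 * Real.sin p.1))
      ((volume.restrict (Set.Ioc 0 (π / 2))).prod μ) := by
    refine integrable_mul_comp_of_ae_norm_le (R := R) (hφ.comp_snd _) continuous_struveKernel
      (hw.comp_snd.mul hsin.aestronglyMeasurable.comp_fst) ?_
    filter_upwards [Measure.quasiMeasurePreserving_snd.ae hw_le] with p hp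
    rw [norm_mul, Complex.norm_real]
    exact (mul_le_of_le_one_right (norm_nonneg _) (abs_sin_le_one _)).trans hp
  simp_rw [← integral_struveKernel_mul_sin, intervalIntegral.integral_of_le pi_div_two_pos.le]
  rw [integral_integral_swap hint]
  simp_rw [integral_const_mul, mul_comm]

theorem integral_f_sqrt_Ioc_general {X : Type*} [MeasurableSpace X] {μ : Measure X} [SFinite μ]
    {φ w : X → ℂ} {R : ℝ} (hφ : Integrable φ μ) (hw : AEStronglyMeasurable w μ)
    (hw_le : ∀ᵐ u ∂μ, ‖w u‖ ≤ R) {f : ℝ → ℂ}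
    (hf : ∀ x : ℝ, 0 < x → f x = ∫ u, φ u * (2 / π + x * w u * struveM (x * w u)) ∂μ)
    {t : ℝ} (ht : 0 < t) :
    ∫ y in (0 : ℝ)..t, f y / √(t ^ 2 - y ^ 2) = ∫ u, Complex.exp (-(t * w u)) * φ u ∂μ := by
  have htw_le : ∀ᵐ u ∂μ, ‖t * w u‖ ≤ t * R := by
    filter_upwards [hw_le] with u hu
    rw [norm_mul, Complex.norm_of_nonneg ht.le]
    gcongr
  calc ∫ y in (0 : ℝ)..t, f y / √(t ^ 2 - y ^ 2)
      = ∫ y in (t * sin 0)..(t * sin (π / 2)), (√(t ^ 2 - y ^ 2))⁻¹ • f y := by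
        rw [sin_zero, sin_pi_div_two, mul_zero, mul_one]
        simp only [div_eq_inv_mul, Complex.real_smul, Complex.ofReal_inv]
    _ = ∫ α in (0 : ℝ)..(π / 2), f (t * sin α) :=
        integral_inv_sqrt_sq_sub_sq_smul f ht (by linarith [pi_pos]) pi_div_two_pos.le le_rfl
    _ = ∫ α in (0 : ℝ)..(π / 2), ∫ u, φ u * struveKernel (t * w u * Real.sin α) ∂μ := by
        refine intervalIntegral.integral_congr_uIoo fun α hα => ?_
        rw [Set.uIoo_of_le pi_div_two_pos.le] at hα
        have hsin : 0 < sin α := sin_pos_of_pos_of_lt_pi hα.1 (by linarith [hα.2, pi_pos])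
        simp only [hf _ (mul_pos ht hsin), struveKernel, Complex.ofReal_mul, mul_right_comm]
    _ = ∫ u, Complex.exp (-(t * w u)) * φ u ∂μ :=
        integral_integral_struveKernel hφ (hw.const_mul _) htw_le

/-- `∫₀^t f(y)/(t² − y²)^{1/2} dy = ∫_{−π}^{π} e^{−t cosh u} φ(u) du` for the
function `f` of Theorem 2. -/
theorem integral_f_sqrt_Ioc
    (C : ℝ) (hC : 0 < C) (ψ : ℝ → ℂ)
    (hper : ∀ u : ℝ, ψ (u + 2 * π) = ψ u)
    (hlip : ∀ u ∈ Set.Icc (-π) π, ∀ v ∈ Set.Icc (-π) π, ‖ψ u - ψ v‖ ≤ C * |u - v|)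
    (φ : ℝ → ℂ) (hφ : ∀ u : ℝ, φ u = ψ u * Real.sinh u)
    (f : ℝ → ℂ)
    (hf : ∀ x : ℝ, 0 < x → f x = ∫ u in (-π)..π,
      φ u * (((2 / π : ℝ) : ℂ) +
        ((x * Real.cosh u : ℝ) : ℂ) * struveM ((x * Real.cosh u : ℝ) : ℂ))) :
    ∀ t : ℝ, 0 < t →
      ∫ y in (0 : ℝ)..t, f y / ((Real.sqrt (t ^ 2 - y ^ 2) : ℝ) : ℂ) =
        ∫ u in (-π)..π, ((Real.exp (-(t * Real.cosh u)) : ℝ) : ℂ) * φ u := by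
  intro t ht
  have hψ : ContinuousOn ψ (Set.Icc (-π) π) :=
    (LipschitzOnWith.of_dist_le' (K := C) fun u hu v hv => by
      simpa only [dist_eq_norm, norm_eq_abs] using hlip u hu v hv).continuousOn
  have hφ_int : IntegrableOn φ (Set.Ioc (-π) π) := by
    rw [funext hφ]
    exact (hψ.mul (Continuous.continuousOn (by fun_prop))).integrableOn_Icc.mono_set
      Set.Ioc_subset_Icc_self
  have hcosh_le : ∀ᵐ u ∂volume.restrict (Set.Ioc (-π) π), ‖(Real.cosh u : ℂ)‖ ≤ Real.cosh π := by
    refine ae_restrict_of_forall_mem measurableSet_Ioc fun u hu => ?_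
    rw [Complex.norm_of_nonneg (cosh_pos u).le, cosh_le_cosh, abs_of_pos pi_pos]
    exact abs_le.2 ⟨hu.1.le, hu.2⟩
  have hcosh : Continuous fun u : ℝ => (Real.cosh u : ℂ) := by fun_prop
  simp only [intervalIntegral.integral_of_le (neg_le_self pi_pos.le)] at hf ⊢
  simpa using integral_f_sqrt_Ioc_general hφ_int hcosh.aestronglyMeasurable hcosh_le
    (by simpa using hf) ht
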